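/- For every q with √15/5 ≤ q ≤ 1 and every x ∈ (0, π/2), one has sin(x)/x < (1/(3q²))·cos(qx) + 1 − 1/(3q²). -/

import Mathlib

open Real

/-!
Half-angle formulas turn the right-hand side into `1 - x² / 6 * sinc (q x / 2) ^ 2`. As `sinc`
decreases on `[0, π / 2]` and is bounded by `sinc (π / 2)` beyond, for `x ≤ π` the inequality is
hardest for the smallest `q`, namely `q² = 3/5`. For that `q` the Taylor expansions of both sides
agree through order `x⁴`, and the terms of order `x⁶`, namely `-x⁶ / 5040` on the left and
`-x⁶ / 6000` on the right, decide the comparison. The alternating Taylor bounds for `sin` and `cos`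
make this rigorous up to `x = π`.
-/

/-- The sum of the first `n` nonzero terms of the Taylor series of `sin` at `0`, in the form of
`Real.hasSum_sin`; the last one has degree `2 * n - 1`. -/
noncomputable def sinPartialSum (n : ℕ) (x : ℝ) : ℝ :=
  ∑ i ∈ Finset.range n, (-1) ^ i * x ^ (2 * i + 1) / (2 * i + 1).factorial

/-- The sum of the first `n` nonzero terms of the Taylor series of `cos` at `0`, in the form of
`Real.hasSum_cos`; the last one has degree `2 * n - 2`. -/
noncomputable def cosPartialSum (n : ℕ) (x : ℝ) : ℝ :=
  ∑ i ∈ Finset.range n, (-1) ^ i * x ^ (2 * i) / (2 * i).factorial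

theorem sinPartialSum_zero_right (n : ℕ) : sinPartialSum n 0 = 0 := by
  simp [sinPartialSum]

theorem cosPartialSum_succ_zero_right (n : ℕ) : cosPartialSum (n + 1) 0 = 1 := by
  simp [cosPartialSum, Finset.sum_range_succ']

theorem hasDerivAt_const_mul_pow_div_factorial (c : ℝ) (n : ℕ) (x : ℝ) :
    HasDerivAt (fun y : ℝ ↦ c * y ^ (n + 1) / (n + 1).factorial) (c * x ^ n / n.factorial) x := by
  refine (((hasDerivAt_pow (n + 1) x).const_mul c).div_const _).congr_deriv ?_
  rw [Nat.factorial_succ, Nat.add_sub_cancel]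
  push_cast
  field_simp

theorem hasDerivAt_sinPartialSum (n : ℕ) (x : ℝ) :
    HasDerivAt (sinPartialSum n) (cosPartialSum n x) x :=
  HasDerivAt.fun_sum fun i _ ↦ hasDerivAt_const_mul_pow_div_factorial ((-1) ^ i) (2 * i) x

theorem hasDerivAt_cosPartialSum_succ (n : ℕ) (x : ℝ) :
    HasDerivAt (cosPartialSum (n + 1)) (-sinPartialSum n x) x := by
  have hsplit : cosPartialSum (n + 1) = fun y ↦
      ∑ i ∈ Finset.range n, (-1 : ℝ) ^ (i + 1) * y ^ (2 * i + 1 + 1) / (2 * i + 1 + 1).factorial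
        + 1 := by
    funext y
    simp [cosPartialSum, Finset.sum_range_succ', mul_add]
  rw [hsplit]
  refine ((HasDerivAt.fun_sum fun i _ ↦ hasDerivAt_const_mul_pow_div_factorial
    ((-1) ^ (i + 1)) (2 * i + 1) x).add_const 1).congr_deriv ?_
  rw [sinPartialSum, ← Finset.sum_neg_distrib]
  exact Finset.sum_congr rfl fun i _ ↦ by ring

theorem nonneg_of_hasDerivAt_nonneg {f f' : ℝ → ℝ} {a : ℝ}
    (hf : ∀ y, a ≤ y → HasDerivAt f (f' y) y) (hfa : 0 ≤ f a) (hf' : ∀ y, a ≤ y → 0 ≤ f' y)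
    {x : ℝ} (hx : a ≤ x) : 0 ≤ f x := by
  have hmono : MonotoneOn f (Set.Ici a) :=
    monotoneOn_of_hasDerivWithinAt_nonneg (convex_Ici a)
      (fun y hy ↦ (hf y hy).continuousAt.continuousWithinAt)
      (fun y hy ↦ (hf y (interior_subset hy)).hasDerivWithinAt)
      fun y hy ↦ hf' y (interior_subset hy)
  exact hfa.trans (hmono Set.self_mem_Ici hx hx)

theorem neg_one_pow_mul_sinPartialSum_sub_sin_nonneg_of_cos {n : ℕ}
    (hcos : ∀ x : ℝ, 0 ≤ x → 0 ≤ (-1) ^ n * (cosPartialSum (n + 1) x - cos x)) {x : ℝ}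
    (hx : 0 ≤ x) : 0 ≤ (-1) ^ n * (sinPartialSum (n + 1) x - sin x) :=
  nonneg_of_hasDerivAt_nonneg
    (fun y _ ↦ ((hasDerivAt_sinPartialSum (n + 1) y).sub (hasDerivAt_sin y)).const_mul _)
    (by simp [sinPartialSum_zero_right]) hcos hx

theorem neg_one_pow_mul_cosPartialSum_sub_cos_nonneg (n : ℕ) {x : ℝ} (hx : 0 ≤ x) :
    0 ≤ (-1) ^ n * (cosPartialSum (n + 1) x - cos x) := by
  induction n generalizing x with
  | zero => simpa [cosPartialSum] using cos_le_one x
  | succ n ih =>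
    refine nonneg_of_hasDerivAt_nonneg
      (fun y _ ↦ ((hasDerivAt_cosPartialSum_succ (n + 1) y).sub (hasDerivAt_cos y)).const_mul _)
      (by simp [cosPartialSum_succ_zero_right]) (fun y hy ↦ ?_) hx
    have hsin := neg_one_pow_mul_sinPartialSum_sub_sin_nonneg_of_cos (fun _ ↦ ih) hy
    rw [pow_succ]
    linarith

theorem neg_one_pow_mul_sinPartialSum_sub_sin_nonneg (n : ℕ) {x : ℝ} (hx : 0 ≤ x) :
    0 ≤ (-1) ^ n * (sinPartialSum (n + 1) x - sin x) :=
  neg_one_pow_mul_sinPartialSum_sub_sin_nonneg_of_cos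
    (fun _ ↦ neg_one_pow_mul_cosPartialSum_sub_cos_nonneg n) hx

theorem taylor_six_le_cos (x : ℝ) : 1 - x ^ 2 / 2 + x ^ 4 / 24 - x ^ 6 / 720 ≤ cos x := by
  have h := neg_one_pow_mul_cosPartialSum_sub_cos_nonneg 3 (abs_nonneg x)
  have even_pow_abs (k : ℕ) : |x| ^ (2 * k) = x ^ (2 * k) := (even_two_mul k).pow_abs x
  simp only [cosPartialSum, even_pow_abs, cos_abs] at h
  norm_num [Finset.sum_range_succ, Nat.factorial] at h
  linarith

theorem sin_le_taylor_nine {x : ℝ} (hx : 0 ≤ x) :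
    sin x ≤ x - x ^ 3 / 6 + x ^ 5 / 120 - x ^ 7 / 5040 + x ^ 9 / 362880 := by
  have h := neg_one_pow_mul_sinPartialSum_sub_sin_nonneg 4 hx
  norm_num [sinPartialSum, Finset.sum_range_succ, Nat.factorial] at h
  linarith

theorem mul_sinc (x : ℝ) : x * sinc x = sin x := by
  rcases eq_or_ne x 0 with rfl | hx
  · simp
  · rw [sinc_of_ne_zero hx, mul_div_cancel₀ _ hx]

theorem sinc_le_taylor_eight {x : ℝ} (hx : 0 < x) :
    sinc x ≤ 1 - x ^ 2 / 6 + x ^ 4 / 120 - x ^ 6 / 5040 + x ^ 8 / 362880 := by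
  rw [sinc_of_ne_zero hx.ne', div_le_iff₀ hx]
  linarith [sin_le_taylor_nine hx.le]

theorem sinc_abs (x : ℝ) : sinc |x| = sinc x := by
  rcases abs_choice x with h | h <;> simp [h]

theorem abs_sinc_le_inv_abs {x : ℝ} (hx : x ≠ 0) : |sinc x| ≤ |x|⁻¹ := by
  rw [sinc_of_ne_zero hx, abs_div, ← one_div]
  gcongr
  exact abs_sin_le_one x

theorem antitoneOn_sinc : AntitoneOn sinc (Set.Icc 0 π) := by
  rintro u ⟨hu₀, huπ⟩ v ⟨-, hvπ⟩ huv
  rcases hu₀.eq_or_lt with rfl | hu₀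
  · exact sinc_zero ▸ sinc_le_one v
  have hv₀ : 0 < v := hu₀.trans_le huv
  have hslope : slope sin 0 v ≤ slope sin 0 u :=
    strictConcaveOn_sin_Icc.concaveOn.antitoneOn_slope_gt ⟨le_rfl, pi_pos.le⟩
      ⟨⟨hu₀.le, huπ⟩, hu₀⟩ ⟨⟨hv₀.le, hvπ⟩, hv₀⟩ huv
  simpa [slope_def_field, sinc_of_ne_zero hu₀.ne', sinc_of_ne_zero hv₀.ne'] using hslope

theorem abs_sinc_le_sinc {u v : ℝ} (hu₀ : 0 ≤ u) (hu : u ≤ π / 2) (huv : u ≤ |v|) :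
    |sinc v| ≤ sinc u := by
  have hπ := pi_pos
  have hv₀ := abs_nonneg v
  rcases le_total |v| (π / 2) with hv | hv
  · have hnonneg : 0 ≤ sinc |v| := by
      rw [sinc_apply]
      have := sin_nonneg_of_nonneg_of_le_pi hv₀ (by linarith)
      positivity
    rw [← sinc_abs v, abs_of_nonneg hnonneg]
    exact antitoneOn_sinc ⟨hu₀, by linarith⟩ ⟨hv₀, by linarith⟩ huv
  · calc |sinc v| ≤ |v|⁻¹ := abs_sinc_le_inv_abs (abs_pos.mp (by linarith))
      _ ≤ (π / 2)⁻¹ := by gcongr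
      _ = sinc (π / 2) := by
        rw [sinc_of_ne_zero (by positivity), sin_pi_div_two, one_div]
      _ ≤ sinc u := antitoneOn_sinc ⟨hu₀, by linarith⟩ ⟨by positivity, by linarith⟩ hu

theorem cos_mul_combination_eq_one_sub_sinc_sq {q : ℝ} (hq : q ≠ 0) (x : ℝ) :
    1 / (3 * q ^ 2) * cos (q * x) + 1 - 1 / (3 * q ^ 2) =
      1 - x ^ 2 / 6 * sinc (q * x / 2) ^ 2 := by
  have hhalf : cos (q * x) = 1 - 2 * (q * x / 2 * sinc (q * x / 2)) ^ 2 := by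
    rw [mul_sinc, sin_sq_eq_half_sub, mul_div_cancel₀ _ two_ne_zero]
    ring
  rw [hhalf]
  field_simp
  ring

theorem sinc_lt_one_sub_sinc_sq_of_sq_eq {q x : ℝ} (hq : q ^ 2 = 3 / 5) (hx₀ : 0 < x)
    (hx : x ≤ π) : sinc x < 1 - x ^ 2 / 6 * sinc (q * x / 2) ^ 2 := by
  have hq4 : q ^ 4 = 9 / 25 := by rw [show q ^ 4 = (q ^ 2) ^ 2 by ring, hq]; norm_num
  have hq6 : q ^ 6 = 27 / 125 := by rw [show q ^ 6 = (q ^ 2) ^ 3 by ring, hq]; norm_num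
  have hsinc := sinc_le_taylor_eight hx₀
  have hcos := taylor_six_le_cos (q * x)
  rw [mul_pow, mul_pow, mul_pow, hq, hq4, hq6] at hcos
  have hx_sq : x ^ 2 < 11 := by nlinarith [pi_lt_d2]
  have hgap : 0 < x ^ 6 * (1 / 5040 - 1 / 6000 - x ^ 2 / 362880) :=
    mul_pos (by positivity) (by linarith)
  rw [← cos_mul_combination_eq_one_sub_sinc_sq (by rintro rfl; norm_num at hq), hq]
  linarith

theorem stmt_7_general (q : ℝ) (hq : 3 / 5 ≤ q ^ 2) (x : ℝ) (hx : x ∈ Set.Ioc 0 π) :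
    sin x / x < 1 / (3 * q ^ 2) * cos (q * x) + 1 - 1 / (3 * q ^ 2) := by
  obtain ⟨hx₀, hxπ⟩ := hx
  have hq₀ : q ≠ 0 := by rintro rfl; norm_num at hq
  set r := √(3 / 5)
  have hr_sq : r ^ 2 = 3 / 5 := sq_sqrt (by norm_num)
  have hr_le_one : r ≤ 1 := sqrt_le_one.mpr (by norm_num)
  have hr_le_abs : r ≤ |q| := (sqrt_le_sqrt hq).trans_eq (sqrt_sq_eq_abs q)
  have hsinc : |sinc (q * x / 2)| ≤ sinc (r * x / 2) := by
    refine abs_sinc_le_sinc (by positivity) (by nlinarith) ?_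
    rw [abs_div, abs_mul, abs_of_pos hx₀, abs_two]
    gcongr
  rw [← sinc_of_ne_zero hx₀.ne', cos_mul_combination_eq_one_sub_sinc_sq hq₀]
  calc sinc x < 1 - x ^ 2 / 6 * sinc (r * x / 2) ^ 2 :=
        sinc_lt_one_sub_sinc_sq_of_sq_eq hr_sq hx₀ hxπ
    _ ≤ 1 - x ^ 2 / 6 * sinc (q * x / 2) ^ 2 := by
        rw [← sq_abs (sinc (q * x / 2))]
        gcongr

/-- For `√15/5 ≤ q ≤ 1` and `x ∈ (0, π/2)`,
`sin x / x < (1/(3q²))·cos(qx) + 1 − 1/(3q²)`. -/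
theorem stmt_7 (q : ℝ) (hq1 : Real.sqrt 15 / 5 ≤ q) (hq2 : q ≤ 1)
    (x : ℝ) (hx : x ∈ Set.Ioo (0 : ℝ) (π / 2)) :
    Real.sin x / x < 1 / (3 * q ^ 2) * Real.cos (q * x) + 1 - 1 / (3 * q ^ 2) := by
  have hq : 3 / 5 ≤ q ^ 2 := by
    calc (3 / 5 : ℝ) = (√15 / 5) ^ 2 := by rw [div_pow, sq_sqrt (by norm_num)]; norm_num
      _ ≤ q ^ 2 := by gcongr
  exact stmt_7_general q hq x ⟨hx.1, hx.2.le.trans (half_le_self pi_pos.le)⟩
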